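/- arXiv:1608.01697 — 2 statements merged into one kernel-verified Lean document; each statement's English description precedes it below -/
import Mathlib

section
/- Let E be a real normed vector space and let a, b, c, d ∈ E. If the closed segments [a,b] and [c,d] have a common point, then ‖a−c‖ + ‖b−d‖ ≤ ‖a−b‖ + ‖c−d‖. In particular, if ‖a−b‖ ≤ s and ‖c−d‖ ≤ s for some s > 0, then min(‖a−c‖, ‖b−d‖) ≤ s. -/
theorem dist_add_dist_le_of_dist_add_dist_eq {α : Type*} [PseudoMetricSpace α]
    {a b c d p : α} (hab : dist a p + dist p b = dist a b)
    (hcd : dist c p + dist p d = dist c d) :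
    dist a c + dist b d ≤ dist a b + dist c d :=
  calc dist a c + dist b d
      ≤ (dist a p + dist p c) + (dist b p + dist p d) :=
        add_le_add (dist_triangle a p c) (dist_triangle b p d)
    _ = (dist a p + dist p b) + (dist c p + dist p d) := by
        rw [dist_comm p c, dist_comm b p]; ring
    _ = dist a b + dist c d := by rw [hab, hcd]

theorem segments_intersect_norm_bound_general {V P : Type*} [SeminormedAddCommGroup V]
    [NormedSpace ℝ V] [PseudoMetricSpace P] [NormedAddTorsor V P] {a b c d : P}
    (h : (affineSegment ℝ a b ∩ affineSegment ℝ c d).Nonempty) :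
    dist a c + dist b d ≤ dist a b + dist c d ∧
    ∀ s : ℝ, dist a b ≤ s → dist c d ≤ s → min (dist a c) (dist b d) ≤ s := by
  obtain ⟨p, hab, hcd⟩ := h
  have hsum : dist a c + dist b d ≤ dist a b + dist c d :=
    dist_add_dist_le_of_dist_add_dist_eq (Wbtw.dist_add_dist hab) (Wbtw.dist_add_dist hcd)
  exact ⟨hsum, fun s hab_le hcd_le ↦
    (min_le_max_of_add_le_add hsum).trans (max_le hab_le hcd_le)⟩

/-- If the closed segments `[a,b]` and `[c,d]` in a real normed vector space
have a common point, then `‖a-c‖ + ‖b-d‖ ≤ ‖a-b‖ + ‖c-d‖`; in particular, if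
`‖a-b‖ ≤ s` and `‖c-d‖ ≤ s` for some `s > 0`, then
`min ‖a-c‖ ‖b-d‖ ≤ s`. -/
theorem segments_intersect_norm_bound {E : Type*} [NormedAddCommGroup E]
    [NormedSpace ℝ E] (a b c d : E)
    (h : (segment ℝ a b ∩ segment ℝ c d).Nonempty) :
    ‖a - c‖ + ‖b - d‖ ≤ ‖a - b‖ + ‖c - d‖ ∧
    ∀ s : ℝ, 0 < s → ‖a - b‖ ≤ s → ‖c - d‖ ≤ s → min ‖a - c‖ ‖b - d‖ ≤ s := by
  simp only [← affineSegment_eq_segment, ← dist_eq_norm] at h ⊢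
  exact (segments_intersect_norm_bound_general h).imp_right fun hmin s _ ↦ hmin s
end

section
/- Let r > 0. Let p_0, p_1, …, p_k be points in the unit square [0,1]² with Euclidean distance |p_{i+1} − p_i| ≤ r/2 for all i, such that p_0 has x-coordinate at most r/5 and p_k has x-coordinate at least 1 − r/5. Let q_0, q_1, …, q_l be points in [0,1]² with |q_{j+1} − q_j| ≤ r/2 for all j, such that q_0 has y-coordinate at least 1 − r/5 and q_l has y-coordinate at most r/5. Then there exist indices i and j with |p_i − q_j| ≤ r. -/
/-!
The differences `p i - q j` form a planar vector field on a grid, and in the supremum norm the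
claim is a discrete Poincaré–Miranda theorem. If all these vectors were long, each would point in
one of the four axis directions, and neighbouring vectors, being close, would never point in
opposite directions. The signed number of switches from east to north is then the same along any
two grid paths with common endpoints. From the top left to the bottom right corner, the path along
the top and right sides counts only whether the last vector points north, and the path along the
left and bottom sides, with the opposite sign, whether it points east. It does exactly one of these.
-/

theorem sum_succ_sub_castSucc {A : Type*} [AddCommGroup A] {n : ℕ} (f : Fin (n + 1) → A) :
    ∑ i : Fin n, (f i.succ - f i.castSucc) = f (Fin.last n) - f 0 := by
  rw [Finset.sum_sub_distrib, sub_eq_sub_iff_add_eq_add, add_comm, ← Fin.sum_univ_succ,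
    Fin.sum_univ_castSucc, add_comm]

-- Green formula for a grid `1`-cochain (`h` on horizontal, `v` on vertical edges).
theorem sum_boundary_eq_of_cell_eq {A : Type*} [AddCommGroup A] {k l : ℕ}
    (h : Fin k → Fin (l + 1) → A) (v : Fin (k + 1) → Fin l → A)
    (hcell : ∀ i j, h i j.castSucc + v i.succ j = v i.castSucc j + h i j.succ) :
    ∑ i, h i 0 + ∑ j, v (Fin.last k) j = ∑ j, v 0 j + ∑ i, h i (Fin.last l) := by
  have increments_eq : ∑ i, (h i (Fin.last l) - h i 0) = ∑ j, (v (Fin.last k) j - v 0 j) :=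
    calc ∑ i, (h i (Fin.last l) - h i 0)
        = ∑ i, ∑ j : Fin l, (h i j.succ - h i j.castSucc) := by simp only [sum_succ_sub_castSucc]
      _ = ∑ i : Fin k, ∑ j, (v i.succ j - v i.castSucc j) :=
        Finset.sum_congr rfl fun i _ ↦ Finset.sum_congr rfl fun j _ ↦
          sub_eq_sub_iff_add_eq_add.2 (by rw [add_comm, ← hcell, add_comm])
      _ = ∑ j, ∑ i : Fin k, (v i.succ j - v i.castSucc j) := Finset.sum_comm
      _ = ∑ j, (v (Fin.last k) j - v 0 j) :=
        Finset.sum_congr rfl fun j _ ↦ sum_succ_sub_castSucc fun i ↦ v i j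
  rw [Finset.sum_sub_distrib, Finset.sum_sub_distrib, sub_eq_sub_iff_add_eq_add] at increments_eq
  rw [add_comm, ← increments_eq, add_comm]

/-- The four axis directions of the plane, used to label the long vectors of a planar field. -/
inductive Direction
  | east | north | west | south
  deriving DecidableEq

namespace Direction

instance : Fintype Direction where
  elems := {east, north, west, south}
  complete d := by cases d <;> decide

/-- The opposite direction; nearby long vectors never have opposite labels. -/
def opp : Direction → Direction
  | east => west
  | north => south
  | west => east
  | south => north

/-- The coordinate of a planar vector in a given direction, that is, its inner product with the unit
vector pointing in that direction. -/
def coord : Direction → (Fin 2 → ℝ) → ℝ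
  | east, v => v 0
  | north, v => v 1
  | west, v => -v 0
  | south, v => -v 1

theorem coord_opp (d : Direction) (v : Fin 2 → ℝ) : d.opp.coord v = -d.coord v := by
  cases d <;> simp only [opp, coord, neg_neg]

theorem coord_sub_coord_le_dist (d : Direction) (v w : Fin 2 → ℝ) :
    d.coord v - d.coord w ≤ dist v w := by
  have h (n : Fin 2) : |v n - w n| ≤ dist v w := dist_le_pi_dist v w n
  cases d <;> simp only [coord] <;> linarith [abs_le.1 (h 0), abs_le.1 (h 1)]

theorem exists_lt_coord {s : ℝ} {v : Fin 2 → ℝ} (hv : s < ‖v‖) :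
    ∃ d : Direction, s < d.coord v := by
  contrapose! hv
  refine (pi_norm_le_iff_of_nonempty v).2 (Fin.forall_fin_two.2 ⟨?_, ?_⟩)
  · exact abs_le'.2 ⟨hv east, hv west⟩
  · exact abs_le'.2 ⟨hv north, hv south⟩

theorem ne_of_coord_le {s : ℝ} {a b : Direction} {v : Fin 2 → ℝ}
    (ha : s < a.coord v) (hb : b.coord v ≤ s) : a ≠ b := by
  rintro rfl
  exact hb.not_gt ha

theorem ne_opp_of_dist_le {s : ℝ} {a b : Direction} {v w : Fin 2 → ℝ}
    (hv : s < a.coord v) (hw : s < b.coord w) (hvw : dist v w ≤ 2 * s) : b ≠ a.opp := by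
  rintro rfl
  rw [coord_opp] at hw
  linarith [a.coord_sub_coord_le_dist v w]

/-- The signed number of switches from east to north in a step from one direction to another. -/
def crossing : Direction → Direction → ℤ
  | east, north => 1
  | north, east => -1
  | _, _ => 0

-- Three directions, no two of them opposite, take at most two values.
theorem crossing_add_crossing : ∀ {a b c : Direction}, b ≠ a.opp → c ≠ b.opp → c ≠ a.opp →
    crossing a b + crossing b c = crossing a c := by
  decide

theorem crossing_eq_zero_of_ne_east :
    ∀ {a b : Direction}, a ≠ east → b ≠ east → crossing a b = 0 := by
  decide

theorem crossing_eq_zero_of_ne_north :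
    ∀ {a b : Direction}, a ≠ north → b ≠ north → crossing a b = 0 := by
  decide

theorem crossing_of_ne_west : ∀ {a b : Direction}, a ≠ west → b ≠ west → b ≠ a.opp →
    crossing a b = (if b = north then 1 else 0) - (if a = north then 1 else 0) := by
  decide

theorem crossing_of_ne_south : ∀ {a b : Direction}, a ≠ south → b ≠ south → b ≠ a.opp →
    crossing a b = (if b = east then -1 else 0) - (if a = east then -1 else 0) := by
  decide

end Direction

open Direction

/-- A labelling of a grid by directions in which no two neighbours carry opposite labels, where each
grid square is cut into two triangles by its diagonal from `(i, j)` to `(i + 1, j + 1)`. -/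
structure IsOppositeFree {k l : ℕ} (L : Fin (k + 1) → Fin (l + 1) → Direction) : Prop where
  row : ∀ (i : Fin k) j, L i.succ j ≠ (L i.castSucc j).opp
  column : ∀ i (j : Fin l), L i j.succ ≠ (L i j.castSucc).opp
  diagonal : ∀ (i : Fin k) (j : Fin l), L i.succ j.succ ≠ (L i.castSucc j.castSucc).opp

namespace IsOppositeFree

variable {k l : ℕ} {L : Fin (k + 1) → Fin (l + 1) → Direction}

theorem sum_crossing_eq (hL : IsOppositeFree L) :
    ∑ i : Fin k, crossing (L i.castSucc 0) (L i.succ 0)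
        + ∑ j : Fin l, crossing (L (Fin.last k) j.castSucc) (L (Fin.last k) j.succ)
      = ∑ j : Fin l, crossing (L 0 j.castSucc) (L 0 j.succ)
        + ∑ i : Fin k, crossing (L i.castSucc (Fin.last l)) (L i.succ (Fin.last l)) := by
  refine sum_boundary_eq_of_cell_eq (fun i j ↦ crossing (L i.castSucc j) (L i.succ j))
    (fun i j ↦ crossing (L i j.castSucc) (L i j.succ)) fun i j ↦ ?_
  rw [crossing_add_crossing (hL.row _ _) (hL.column _ _) (hL.diagonal _ _),
    crossing_add_crossing (hL.column _ _) (hL.row _ _) (hL.diagonal _ _)]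

theorem not_boundary_avoids (hL : IsOppositeFree L)
    (hleft : ∀ j, L 0 j ≠ east) (hright : ∀ j, L (Fin.last k) j ≠ west)
    (htop : ∀ i, L i 0 ≠ north) (hbottom : ∀ i, L i (Fin.last l) ≠ south) : False := by
  have top : ∑ i : Fin k, crossing (L i.castSucc 0) (L i.succ 0) = 0 :=
    Finset.sum_eq_zero fun i _ ↦ crossing_eq_zero_of_ne_north (htop _) (htop _)
  have left : ∑ j : Fin l, crossing (L 0 j.castSucc) (L 0 j.succ) = 0 :=
    Finset.sum_eq_zero fun j _ ↦ crossing_eq_zero_of_ne_east (hleft _) (hleft _)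
  have right : ∑ j : Fin l, crossing (L (Fin.last k) j.castSucc) (L (Fin.last k) j.succ)
      = if L (Fin.last k) (Fin.last l) = north then 1 else 0 := by
    simp only [crossing_of_ne_west (hright _) (hright _) (hL.column _ _),
      sum_succ_sub_castSucc fun j ↦ if L (Fin.last k) j = north then (1 : ℤ) else 0,
      if_neg (htop _), sub_zero]
  have bottom : ∑ i : Fin k, crossing (L i.castSucc (Fin.last l)) (L i.succ (Fin.last l))
      = if L (Fin.last k) (Fin.last l) = east then -1 else 0 := by
    simp only [crossing_of_ne_south (hbottom _) (hbottom _) (hL.row _ _),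
      sum_succ_sub_castSucc fun i ↦ if L i (Fin.last l) = east then (-1 : ℤ) else 0,
      if_neg (hleft _), sub_zero]
  have corner : ∀ d : Direction, d ≠ west → d ≠ south →
      (if d = north then (1 : ℤ) else 0) ≠ if d = east then -1 else 0 := by decide
  have sum_eq := hL.sum_crossing_eq
  rw [top, left, right, bottom, zero_add, zero_add] at sum_eq
  exact corner _ (hright _) (hbottom _) sum_eq

end IsOppositeFree

theorem discrete_poincare_miranda {s : ℝ} {k l : ℕ} (f : Fin (k + 1) → Fin (l + 1) → Fin 2 → ℝ)
    (hrow : ∀ (i : Fin k) j, dist (f i.castSucc j) (f i.succ j) ≤ s)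
    (hcolumn : ∀ i (j : Fin l), dist (f i j.castSucc) (f i j.succ) ≤ s)
    (hleft : ∀ j, f 0 j 0 ≤ s) (hright : ∀ j, -s ≤ f (Fin.last k) j 0)
    (htop : ∀ i, f i 0 1 ≤ s) (hbottom : ∀ i, -s ≤ f i (Fin.last l) 1) :
    ∃ i j, ‖f i j‖ ≤ s := by
  by_contra! hlong
  choose L hL using fun i j ↦ exists_lt_coord (hlong i j)
  have le_two_mul {x y : Fin 2 → ℝ} (hxy : dist x y ≤ s) : dist x y ≤ 2 * s := by
    linarith [dist_nonneg.trans hxy]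
  have L_free : IsOppositeFree L :=
    { row := fun i j ↦ ne_opp_of_dist_le (hL _ _) (hL _ _) (le_two_mul (hrow i j))
      column := fun i j ↦ ne_opp_of_dist_le (hL _ _) (hL _ _) (le_two_mul (hcolumn i j))
      diagonal := fun i j ↦ ne_opp_of_dist_le (hL _ _) (hL _ _) <|
        (dist_triangle _ (f i.succ j.castSucc) _).trans <| by
          linarith [hrow i j.castSucc, hcolumn i.succ j] }
  exact L_free.not_boundary_avoids
    (fun j ↦ ne_of_coord_le (hL 0 j) (hleft j))
    (fun j ↦ ne_of_coord_le (hL (Fin.last k) j) (neg_le.1 (hright j)))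
    (fun i ↦ ne_of_coord_le (hL i 0) (htop i))
    (fun i ↦ ne_of_coord_le (hL i (Fin.last l)) (neg_le.1 (hbottom i)))

theorem dist_ofLp_le_dist {ι : Type*} [Fintype ι] (x y : EuclideanSpace ℝ ι) :
    dist x.ofLp y.ofLp ≤ dist x y := by
  simpa using (PiLp.lipschitzWith_ofLp 2 fun _ : ι ↦ ℝ).dist_le_mul x y

theorem dist_le_sqrt_card_mul_dist_ofLp {ι : Type*} [Fintype ι] (x y : EuclideanSpace ℝ ι) :
    dist x y ≤ √(Fintype.card ι) * dist x.ofLp y.ofLp := by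
  simpa [Real.sqrt_eq_rpow] using
    (PiLp.antilipschitzWith_ofLp 2 fun _ : ι ↦ ℝ).le_mul_dist x y

theorem crossing_chains_close_general (s : ℝ) (k l : ℕ)
    (p : Fin (k + 1) → EuclideanSpace ℝ (Fin 2))
    (q : Fin (l + 1) → EuclideanSpace ℝ (Fin 2))
    (hpstep : ∀ i : Fin k, dist (p i.castSucc) (p i.succ) ≤ s)
    (hqstep : ∀ j : Fin l, dist (q j.castSucc) (q j.succ) ≤ s)
    (hleft : ∀ j, p 0 0 ≤ q j 0 + s) (hright : ∀ j, q j 0 ≤ p (Fin.last k) 0 + s)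
    (htop : ∀ i, p i 1 ≤ q 0 1 + s) (hbottom : ∀ i, q (Fin.last l) 1 ≤ p i 1 + s) :
    ∃ i j, dist (p i) (q j) ≤ √2 * s := by
  obtain ⟨i, j, hij⟩ : ∃ i j, ‖(p i).ofLp - (q j).ofLp‖ ≤ s := by
    refine discrete_poincare_miranda (fun i j ↦ (p i).ofLp - (q j).ofLp)
      (fun i j ↦ ?_) (fun i j ↦ ?_) (fun j ↦ ?_) (fun j ↦ ?_) (fun i ↦ ?_) fun i ↦ ?_
    · exact (dist_sub_right _ _ _).trans_le ((dist_ofLp_le_dist _ _).trans (hpstep i))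
    · exact (dist_sub_left _ _ _).trans_le ((dist_ofLp_le_dist _ _).trans (hqstep j))
    · exact sub_le_iff_le_add'.2 (hleft j)
    · exact neg_le_sub_iff_le_add.2 (hright j)
    · exact sub_le_iff_le_add'.2 (htop i)
    · exact neg_le_sub_iff_le_add.2 (hbottom i)
  refine ⟨i, j, (dist_le_sqrt_card_mul_dist_ofLp _ _).trans ?_⟩
  rw [Fintype.card_fin, Nat.cast_ofNat, dist_eq_norm]
  gcongr

/-- A left-to-right chain and a top-to-bottom chain of the unit square, each
with step size at most `r/2` and endpoints within `r/5` of the respective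
sides, must come within Euclidean distance `r` of each other. -/
theorem crossing_chains_close (r : ℝ) (hr : 0 < r) (k l : ℕ)
    (p : Fin (k + 1) → EuclideanSpace ℝ (Fin 2))
    (q : Fin (l + 1) → EuclideanSpace ℝ (Fin 2))
    (hp : ∀ i, p i 0 ∈ Set.Icc (0:ℝ) 1 ∧ p i 1 ∈ Set.Icc (0:ℝ) 1)
    (hq : ∀ j, q j 0 ∈ Set.Icc (0:ℝ) 1 ∧ q j 1 ∈ Set.Icc (0:ℝ) 1)
    (hpstep : ∀ i : Fin k, dist (p i.castSucc) (p i.succ) ≤ r / 2)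
    (hqstep : ∀ j : Fin l, dist (q j.castSucc) (q j.succ) ≤ r / 2)
    (hp0 : p 0 0 ≤ r / 5) (hpk : 1 - r / 5 ≤ p (Fin.last k) 0)
    (hq0 : 1 - r / 5 ≤ q 0 1) (hql : q (Fin.last l) 1 ≤ r / 5) :
    ∃ i j, dist (p i) (q j) ≤ r := by
  obtain ⟨i, j, hij⟩ := crossing_chains_close_general (r / 2) k l p q hpstep hqstep
    (fun j ↦ by linarith [(hq j).1.1]) (fun j ↦ by linarith [(hq j).1.2])
    (fun i ↦ by linarith [(hp i).2.2]) (fun i ↦ by linarith [(hp i).2.1])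
  exact ⟨i, j, hij.trans (by nlinarith [Real.sqrt_two_lt_three_halves])⟩
end
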